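/- Let n ≥ 4 be an integer and A > 0 a real constant. For every ε > 0 there exists a constant C = C(n, A, ε) such that the following holds for all real H ≥ 2: for all nonzero integers Q_0, Q_1, …, Q_n with |Q_i| ≤ H^A for i = 0, 1, …, n, the number of n-tuples (x_1, …, x_n) of nonzero integers with |x_i| ≤ H for all i satisfying Σ_{i=1}^n Q_i/x_i = Q_0 is at most C·H^{n/2 − 1/(2n−2) + ε}. -/

import Mathlib

/-!
Write each entry of a solution as `x i = ± s i * y i`, where `s i` is composed of primes dividing
`W = ∏ |Q i|` and `y i` is coprime to `W`; there are only `O(H ^ ε)` possible values of `s i`.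
Clearing denominators shows that `y i` divides `∏ j ≠ i, y j`, so the largest `y i` shares with some
`y j` a gcd `g ≥ y i ^ (1 / (n - 1))`. Divide these two entries by `g` and call the resulting tuple
`w`. Every prime factor of `∏ w` outside `g` divides at least two of the `y`s, hence there is a
positive integer `a` with `a ^ 2 * g ≤ ∏ y` such that every `w k` divides `a ^ 3`. In particular
`a ≤ H ^ (n / 2 - 1 / (2 * n - 2))`, and once `a` and the pair `{i, j}` are fixed, signs, `s` and
`w` take `O(H ^ ε)` values. The equation then determines `g`, unless `Q i / x i + Q j / x j = 0`.
Such a cancellation leaves `O(H)` choices for the pair `(x i, x j)` and an equation of the same kind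
in `n - 2` variables, to which induction applies.
-/

section ArithmeticOfDivisors

open Finset

theorem natCast_add_one_le_mul_pow {x : ℝ} (hx : 1 < x) (k : ℕ) :
    (k : ℝ) + 1 ≤ (1 + 1 / (x - 1)) * x ^ k := by
  have hx₁ : 0 < x - 1 := sub_pos.2 hx
  have hinv : 0 ≤ 1 / (x - 1) := by positivity
  have hmul : 0 ≤ k * (x - 1) := by positivity
  calc (k : ℝ) + 1 ≤ k + 1 + k * (x - 1) + 1 / (x - 1) := by linarith
    _ = (1 + 1 / (x - 1)) * (1 + k * (x - 1)) := by field_simp; ring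
    _ ≤ (1 + 1 / (x - 1)) * x ^ k := by
      gcongr
      exact one_add_mul_sub_le_pow (by linarith) k

theorem card_filter_rpow_lt_le (s : Finset ℕ) {ε c : ℝ} (hε : 0 < ε) (hc : 0 ≤ c) :
    #{p ∈ s | ((p : ℕ) : ℝ) ^ ε < c} ≤ ⌈c ^ ε⁻¹⌉₊ := by
  rw [← card_range ⌈c ^ ε⁻¹⌉₊]
  refine card_le_card fun p hp ↦ ?_
  rw [mem_range, Nat.lt_ceil]
  exact (Real.lt_rpow_inv_iff_of_pos p.cast_nonneg hc hε).2 (mem_filter.1 hp).2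

theorem exists_card_divisors_le_rpow {ε : ℝ} (hε : 0 < ε) :
    ∃ C > (0 : ℝ), ∀ m : ℕ, m ≠ 0 → (#m.divisors : ℝ) ≤ C * (m : ℝ) ^ ε := by
  have htwo : (1 : ℝ) < 2 ^ ε := Real.one_lt_rpow one_lt_two hε
  set c : ℝ := 1 + 1 / (2 ^ ε - 1)
  have hc : 1 ≤ c := le_add_of_nonneg_right (one_div_nonneg.2 (sub_nonneg.2 htwo.le))
  -- Only the boundedly many primes with `p ^ ε < 2` cost a constant factor.
  have hfactor (p : ℕ) (hp : 2 ≤ p) (k : ℕ) :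
      (k : ℝ) + 1 ≤ (if (p : ℝ) ^ ε < 2 then c else 1) * ((p : ℝ) ^ ε) ^ k := by
    split_ifs with h
    · have hbase : (2 : ℝ) ^ ε ≤ (p : ℝ) ^ ε := by gcongr; exact_mod_cast hp
      exact (natCast_add_one_le_mul_pow htwo k).trans (by gcongr)
    · calc (k : ℝ) + 1 ≤ 2 ^ k := by exact_mod_cast Nat.lt_two_pow_self
        _ ≤ 1 * ((p : ℝ) ^ ε) ^ k := by rw [one_mul]; gcongr; exact not_lt.1 h
  refine ⟨c ^ ⌈(2 : ℝ) ^ ε⁻¹⌉₊, by positivity, fun m hm ↦ ?_⟩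
  have hm_eq : ∏ p ∈ m.primeFactors, ((p : ℝ) ^ ε) ^ m.factorization p = (m : ℝ) ^ ε := by
    conv_rhs => rw [← Nat.prod_factorization_pow_eq_self hm,
      Nat.prod_factorization_eq_prod_primeFactors]
    push_cast
    rw [← Real.finsetProd_rpow _ _ fun _ _ ↦ by positivity]
    exact prod_congr rfl fun p _ ↦ Real.rpow_pow_comm p.cast_nonneg ε _
  calc (#m.divisors : ℝ) = ∏ p ∈ m.primeFactors, ((m.factorization p : ℝ) + 1) := by
        rw [Nat.card_divisors hm]; push_cast; rfl
    _ ≤ ∏ p ∈ m.primeFactors,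
          ((if (p : ℝ) ^ ε < 2 then c else 1) * ((p : ℝ) ^ ε) ^ m.factorization p) :=
        prod_le_prod (fun _ _ ↦ by positivity) fun p hp ↦
          hfactor p (Nat.prime_of_mem_primeFactors hp).two_le _
    _ = c ^ #{p ∈ m.primeFactors | ((p : ℕ) : ℝ) ^ ε < 2} * (m : ℝ) ^ ε := by
        rw [prod_mul_distrib, hm_eq, prod_ite, prod_const, prod_const_one, mul_one]
    _ ≤ c ^ ⌈(2 : ℝ) ^ ε⁻¹⌉₊ * (m : ℝ) ^ ε := by
        gcongr
        exact card_filter_rpow_lt_le _ hε zero_le_two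

theorem exists_card_divisors_le_rpow_of_le_rpow {E η : ℝ} (hE : 0 < E) (hη : 0 < η) :
    ∃ C > (0 : ℝ), ∀ H : ℝ, 0 ≤ H → ∀ m : ℕ, m ≠ 0 → (m : ℝ) ≤ H ^ E →
      (#m.divisors : ℝ) ≤ C * H ^ η := by
  obtain ⟨C, hC, hdiv⟩ := exists_card_divisors_le_rpow (div_pos hη hE)
  refine ⟨C, hC, fun H hH m hm hmH ↦ (hdiv m hm).trans ?_⟩
  calc C * (m : ℝ) ^ (η / E) ≤ C * (H ^ E) ^ (η / E) := by gcongr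
    _ = C * H ^ η := by rw [← Real.rpow_mul hH, mul_div_cancel₀ _ hE.ne']

theorem exists_eq_pow_mul_dvd_pow {s W K : ℕ} (hs : s ≠ 0) (hK : K ≠ 0)
    (hsW : s.primeFactors ⊆ W.primeFactors) : ∃ t r, s = t ^ K * r ∧ r ∣ W ^ K := by
  obtain ⟨r, hr⟩ : K.floorRoot s ^ K ∣ s := Nat.floorRoot_pow_dvd
  have hr₀ : r ≠ 0 := right_ne_zero_of_mul (hr ▸ hs)
  have hroot : K.floorRoot s ^ K ≠ 0 := left_ne_zero_of_mul (hr ▸ hs)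
  refine ⟨K.floorRoot s, r, hr, ?_⟩
  rcases eq_or_ne W 0 with rfl | hW
  · simp [hK]
  rw [← Nat.factorization_prime_le_iff_dvd hr₀ (pow_ne_zero K hW)]
  intro p hp
  by_cases hpr : p ∣ r
  · have hpW : p ∈ W.primeFactors :=
      hsW (Nat.mem_primeFactors.2 ⟨hp, hpr.trans (Dvd.intro_left _ hr.symm), hs⟩)
    have hmod : s.factorization p = K * (s.factorization p / K) + r.factorization p := by
      conv_lhs => rw [hr, Nat.factorization_mul hroot hr₀]
      simp
    have hr_lt : r.factorization p < K := by
      have := Nat.mod_lt (s.factorization p) (Nat.pos_of_ne_zero hK)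
      have := Nat.div_add_mod (s.factorization p) K
      omega
    calc r.factorization p ≤ K * 1 := by omega
      _ ≤ K * W.factorization p := by
        gcongr
        exact (hp.dvd_iff_one_le_factorization hW).1 (Nat.dvd_of_mem_primeFactors hpW)
      _ = (W ^ K).factorization p := by simp
  · simp [Nat.factorization_eq_zero_of_not_dvd hpr]

theorem exists_eq_mul_coprime {W x : ℕ} (hW : W ≠ 0) (hx : x ≠ 0) :
    ∃ s y, x = s * y ∧ s.primeFactors ⊆ W.primeFactors ∧ y.Coprime W := by
  induction x using induction_on_primes with
  | zero => exact absurd rfl hx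
  | one => exact ⟨1, 1, by simp⟩
  | prime_mul p x hp ih =>
    obtain ⟨s, y, rfl, hs, hy⟩ := ih (right_ne_zero_of_mul hx)
    by_cases hpW : p ∣ W
    · refine ⟨p * s, y, (mul_assoc p s y).symm, ?_, hy⟩
      have hs₀ : s ≠ 0 := left_ne_zero_of_mul (right_ne_zero_of_mul hx)
      rw [Nat.primeFactors_mul hp.ne_zero hs₀, hp.primeFactors]
      exact union_subset (by simp [hp, hpW, hW]) hs
    · exact ⟨s, p * y, mul_left_comm p s y, hs,
        ((Nat.Prime.coprime_iff_not_dvd hp).2 hpW).mul_left hy⟩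

/-- The positive integers up to `H` all of whose prime factors divide `W`, as a finite version of
`Nat.factoredNumbers`. -/
noncomputable def factoredNumbersUpTo (H : ℝ) (W : ℕ) : Finset ℕ :=
  {s ∈ Icc 1 ⌊H⌋₊ | s.primeFactors ⊆ W.primeFactors}

theorem mem_factoredNumbersUpTo {H : ℝ} {W s : ℕ} :
    s ∈ factoredNumbersUpTo H W ↔ s ≠ 0 ∧ (s : ℝ) ≤ H ∧ s.primeFactors ⊆ W.primeFactors := by
  rw [factoredNumbersUpTo, mem_filter, mem_Icc, Nat.one_le_iff_ne_zero, and_assoc]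
  exact and_congr_right fun hs ↦ and_congr_left' (Nat.le_floor_iff' hs)

theorem card_factoredNumbersUpTo_le {H : ℝ} {W K : ℕ} (hH : 0 ≤ H) (hW : W ≠ 0) (hK : K ≠ 0) :
    (#(factoredNumbersUpTo H W) : ℝ) ≤ H ^ (1 / (K : ℝ)) * #(W ^ K).divisors := by
  have hsub : factoredNumbersUpTo H W ⊆
      (Icc 1 ⌊H ^ (1 / (K : ℝ))⌋₊ ×ˢ (W ^ K).divisors).image fun q ↦ q.1 ^ K * q.2 := by
    intro s hs
    obtain ⟨hs₀, hsH, hsW⟩ := mem_factoredNumbersUpTo.1 hs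
    obtain ⟨t, r, rfl, hr⟩ := exists_eq_pow_mul_dvd_pow hs₀ hK hsW
    have htK : t ^ K ≠ 0 := left_ne_zero_of_mul hs₀
    have ht₀ : t ≠ 0 := by rintro rfl; simp [hK] at htK
    have htH : (t : ℝ) ≤ H ^ (1 / (K : ℝ)) := by
      rw [one_div, Real.le_rpow_inv_iff_of_pos t.cast_nonneg hH (by positivity), Real.rpow_natCast]
      refine le_trans ?_ hsH
      exact_mod_cast Nat.le_mul_of_pos_right _ (Nat.pos_of_ne_zero (right_ne_zero_of_mul hs₀))
    refine mem_image.2 ⟨(t, r), ?_, rfl⟩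
    simp only [mem_product, mem_Icc, Nat.mem_divisors]
    exact ⟨⟨Nat.one_le_iff_ne_zero.2 ht₀, Nat.le_floor htH⟩, hr, pow_ne_zero K hW⟩
  have hcard := (card_le_card hsub).trans card_image_le
  rw [card_product, Nat.card_Icc, Nat.add_sub_cancel] at hcard
  calc (#(factoredNumbersUpTo H W) : ℝ) ≤ ⌊H ^ (1 / (K : ℝ))⌋₊ * #(W ^ K).divisors := by
        exact_mod_cast hcard
    _ ≤ H ^ (1 / (K : ℝ)) * #(W ^ K).divisors := by
        gcongr
        exact Nat.floor_le (by positivity)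

theorem exists_card_factoredNumbersUpTo_le {A η : ℝ} (hA : 0 < A) (hη : 0 < η) :
    ∃ C > (0 : ℝ), ∀ H : ℝ, 1 ≤ H → ∀ W : ℕ, W ≠ 0 → (W : ℝ) ≤ H ^ A →
      (#(factoredNumbersUpTo H W) : ℝ) ≤ C * H ^ η := by
  obtain ⟨k, hk⟩ := exists_nat_one_div_lt (half_pos hη)
  rw [← Nat.cast_add_one] at hk
  set K := k + 1
  obtain ⟨C, hC, hdiv⟩ :=
    exists_card_divisors_le_rpow_of_le_rpow (E := A * K) (by positivity) (half_pos hη)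
  refine ⟨C, hC, fun H hH W hW hWH ↦ ?_⟩
  have hH₀ : 0 < H := by linarith
  have hWK : ((W ^ K : ℕ) : ℝ) ≤ H ^ (A * K) := by
    rw [Nat.cast_pow, Real.rpow_mul_natCast hH₀.le]
    gcongr
  calc (#(factoredNumbersUpTo H W) : ℝ) ≤ H ^ (1 / (K : ℝ)) * #(W ^ K).divisors :=
        card_factoredNumbersUpTo_le hH₀.le hW k.succ_ne_zero
    _ ≤ H ^ (η / 2) * (C * H ^ (η / 2)) := by
        gcongr
        exact hdiv H hH₀.le _ (pow_ne_zero K hW) hWK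
    _ = C * H ^ η := by
        rw [mul_left_comm, ← Real.rpow_add hH₀, add_halves]

end ArithmeticOfDivisors

section LargeGcd

open Finset

variable {ι : Type*}

theorem dvd_prod_gcd {t : Finset ι} {y : ι → ℕ} {b : ℕ} (h : b ∣ ∏ j ∈ t, y j) :
    b ∣ ∏ j ∈ t, b.gcd (y j) := by
  suffices hgcd : b.gcd (∏ j ∈ t, y j) ∣ ∏ j ∈ t, b.gcd (y j) by rwa [Nat.gcd_eq_left h] at hgcd
  clear h
  induction t using Finset.cons_induction with
  | empty => simp
  | cons a t ha ih =>
    simp only [prod_cons]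
    exact (Nat.gcd_mul_right_dvd_mul_gcd _ _ _).trans (mul_dvd_mul_left _ ih)

theorem exists_le_gcd_pow_card {t : Finset ι} (ht : t.Nonempty) {y : ι → ℕ} {b : ℕ} (hb : b ≠ 0)
    (h : b ∣ ∏ j ∈ t, y j) : ∃ j ∈ t, b ≤ b.gcd (y j) ^ #t := by
  obtain ⟨j, hj, hmax⟩ := exists_max_image t (fun j ↦ b.gcd (y j)) ht
  refine ⟨j, hj, ?_⟩
  calc b ≤ ∏ k ∈ t, b.gcd (y k) :=
        Nat.le_of_dvd (prod_pos fun k _ ↦ Nat.gcd_pos_of_pos_left _ (Nat.pos_of_ne_zero hb))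
          (dvd_prod_gcd h)
    _ ≤ b.gcd (y j) ^ #t := prod_le_pow_card _ _ _ hmax

-- If `M = b² c` with `c` squarefree, then `a = b * gcd c g` works: the primes of `c` not dividing
-- `g` all divide `b`.
theorem exists_sq_le_mul_dvd_cube {M g : ℕ} (hM : M ≠ 0) (hg : g ≠ 0)
    (hpow : ∀ p, p.Prime → p ∣ M → ¬p ∣ g → p ^ 2 ∣ M) :
    ∃ a ≠ 0, a ^ 2 ≤ M * g ∧ M ∣ a ^ 3 := by
  obtain ⟨c, b, rfl, hc⟩ := Nat.sq_mul_squarefree M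
  have hb : b ≠ 0 := by rintro rfl; simp at hM
  obtain ⟨d, hd⟩ := Nat.gcd_dvd_left c g
  set e := c.gcd g
  have he : e ≠ 0 := Nat.gcd_ne_zero_right hg
  have hc' := hc
  rw [hd, Nat.squarefree_mul_iff] at hc'
  obtain ⟨hed, -, hd_sq⟩ := hc'
  have hd_dvd : d ∣ b := by
    rw [← Nat.prod_primeFactors_of_squarefree hd_sq]
    refine (prod_dvd_prod_of_subset _ _ _ fun p hp ↦ ?_).trans (Nat.prod_primeFactors_dvd b)
    obtain ⟨hp, hpd, -⟩ := Nat.mem_primeFactors.1 hp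
    have hpc : p ∣ c := hpd.trans (Dvd.intro_left _ hd.symm)
    have hpg : ¬p ∣ g := fun hpg ↦
      Nat.not_coprime_of_dvd_of_dvd hp.one_lt (Nat.dvd_gcd hpc hpg) hpd hed
    have hpM : p * p ∣ b ^ 2 * c := sq p ▸ hpow p hp (hpc.mul_left _) hpg
    exact Nat.mem_primeFactors.2
      ⟨hp, hp.dvd_of_dvd_pow (hc.dvd_of_squarefree_of_mul_dvd_mul_left hpM), hb⟩
  refine ⟨b * e, mul_ne_zero hb he, ?_, ?_⟩
  · calc (b * e) ^ 2 = b ^ 2 * e * e := by ring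
      _ ≤ b ^ 2 * c * g := by
        gcongr
        exacts [Nat.gcd_le_left g (Nat.pos_of_ne_zero hc.ne_zero),
          Nat.gcd_le_right c (Nat.pos_of_ne_zero hg)]
  · calc b ^ 2 * c = b ^ 2 * (e * d) := by rw [← hd]
      _ ∣ b ^ 2 * (e * b) * e ^ 2 := dvd_mul_of_dvd_left (by gcongr) _
      _ = (b * e) ^ 3 := by ring

theorem pow_le_pow_of_sq_mul_le_of_le_pow {a g Y n : ℕ} (hY : Y ≠ 0) (hn : 2 ≤ n)
    (hag : a ^ 2 * g ≤ Y ^ n) (hYg : Y ≤ g ^ (n - 1)) :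
    a ^ (2 * (n - 1)) ≤ Y ^ (n * (n - 1) - 1) := by
  refine Nat.le_of_mul_le_mul_right ?_ (Nat.pos_of_ne_zero hY)
  have hexp : 1 ≤ n * (n - 1) := Nat.mul_pos (by omega) (by omega)
  calc a ^ (2 * (n - 1)) * Y ≤ a ^ (2 * (n - 1)) * g ^ (n - 1) := by gcongr
    _ = (a ^ 2 * g) ^ (n - 1) := by rw [mul_pow, pow_mul]
    _ ≤ (Y ^ n) ^ (n - 1) := by gcongr
    _ = Y ^ (n * (n - 1) - 1) * Y := by rw [← pow_mul, pow_sub_one_mul (by omega)]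

variable [DecidableEq ι]

/-- The tuple obtained from `w` by multiplying the entries indexed by `p` by `g`. In a solution two
entries sharing a large factor `g` are written in this way. -/
def scaleOn {R : Type*} [MulOneClass R] (p : Finset ι) (g : R) (w : ι → R) (k : ι) : R :=
  (if k ∈ p then g else 1) * w k

theorem exists_eq_scaleOn {R : Type*} [Monoid R] {p : Finset ι} {g : R} {y : ι → R}
    (h : ∀ k ∈ p, g ∣ y k) : ∃ w, y = scaleOn p g w := by
  choose! u hu using h
  refine ⟨fun k ↦ if k ∈ p then u k else y k, funext fun k ↦ ?_⟩
  by_cases hk : k ∈ p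
  · simp [scaleOn, hk, hu k hk]
  · simp [scaleOn, hk]

variable [Fintype ι]

theorem prod_scaleOn {R : Type*} [CommMonoid R] (p : Finset ι) (g : R) (w : ι → R) :
    ∏ k, scaleOn p g w k = g ^ #p * ∏ k, w k := by
  simp only [scaleOn, prod_mul_distrib, prod_ite_mem, univ_inter, prod_const]

theorem exists_sq_mul_le_prod_scaleOn {p : Finset ι} (hp : #p = 2) {g : ℕ} {w : ι → ℕ}
    (h₀ : ∀ i, scaleOn p g w i ≠ 0)
    (hdvd : ∀ i, scaleOn p g w i ∣ ∏ j ∈ univ.erase i, scaleOn p g w j) :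
    ∃ a ≠ 0, a ^ 2 * g ≤ ∏ i, scaleOn p g w i ∧ ∀ k, w k ∣ a ^ 3 := by
  have hprod : ∏ i, scaleOn p g w i = g ^ 2 * ∏ i, w i := by rw [prod_scaleOn, hp]
  have hprod₀ : g ^ 2 * ∏ i, w i ≠ 0 := hprod ▸ prod_ne_zero_iff.2 fun i _ ↦ h₀ i
  have hg : g ≠ 0 := ne_zero_pow two_ne_zero (left_ne_zero_of_mul hprod₀)
  obtain ⟨a, ha, ha_sq, ha_cube⟩ :=
    exists_sq_le_mul_dvd_cube (right_ne_zero_of_mul hprod₀) hg fun q hq hqw hqg ↦ by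
      obtain ⟨k, -, hqk⟩ := (hq.prime.dvd_finsetProd_iff _).1 (hprod ▸ hqw.mul_left (g ^ 2))
      have hq_sq : q ^ 2 ∣ g ^ 2 * ∏ i, w i := by
        rw [← hprod, ← mul_prod_erase univ _ (mem_univ k), sq]
        exact mul_dvd_mul hqk (hqk.trans (hdvd k))
      exact (Nat.Coprime.pow 2 2 ((Nat.Prime.coprime_iff_not_dvd hq).2 hqg)).dvd_of_dvd_mul_left
        hq_sq
  refine ⟨a, ha, ?_, fun k ↦ (dvd_prod_of_mem w (mem_univ k)).trans ha_cube⟩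
  calc a ^ 2 * g ≤ (∏ i, w i) * g * g := by gcongr
    _ = ∏ i, scaleOn p g w i := by rw [hprod]; ring

theorem exists_eq_scaleOn_dvd_cube (hι : 2 ≤ Fintype.card ι) {y : ι → ℕ} (hy : ∀ i, y i ≠ 0)
    (hdvd : ∀ i, y i ∣ ∏ j ∈ univ.erase i, y j) :
    ∃ p : Finset ι, #p = 2 ∧ ∃ g w, y = scaleOn p g w ∧ ∃ a ≠ 0, (∀ k, w k ∣ a ^ 3) ∧
      ∃ i, a ^ (2 * (Fintype.card ι - 1)) ≤ y i ^ (Fintype.card ι * (Fintype.card ι - 1) - 1) := by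
  have : Nonempty ι := Fintype.card_pos_iff.1 (by omega)
  obtain ⟨i, -, hmax⟩ := exists_max_image univ y univ_nonempty
  have hcard : #(univ.erase i) = Fintype.card ι - 1 := card_erase_of_mem (mem_univ i)
  obtain ⟨j, hj, hgcd⟩ :=
    exists_le_gcd_pow_card (card_pos.1 (by omega : 0 < #(univ.erase i))) (hy i) (hdvd i)
  obtain ⟨w, hw⟩ : ∃ w, y = scaleOn {i, j} ((y i).gcd (y j)) w :=
    exists_eq_scaleOn (by simp [Nat.gcd_dvd_left, Nat.gcd_dvd_right])
  have hpair : #{i, j} = 2 := card_pair (ne_of_mem_erase hj).symm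
  obtain ⟨a, ha, ha_sq, ha_cube⟩ :=
    exists_sq_mul_le_prod_scaleOn hpair (fun k ↦ hw ▸ hy k) (fun k ↦ hw ▸ hdvd k)
  refine ⟨{i, j}, hpair, _, w, hw, a, ha, ha_cube, i, ?_⟩
  refine pow_le_pow_of_sq_mul_le_of_le_pow (hy i) hι ?_ (hcard ▸ hgcd)
  calc a ^ 2 * (y i).gcd (y j) ≤ ∏ k, y k := by rwa [← hw] at ha_sq
    _ ≤ y i ^ Fintype.card ι := prod_le_pow_card _ _ _ hmax

end LargeGcd

section EgyptianSolutions

open Finset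

variable {H : ℝ}

theorem mem_Icc_floor_of_abs_le {m : ℤ} (hm : |(m : ℝ)| ≤ H) : m ∈ Set.Icc (-⌊H⌋) ⌊H⌋ := by
  rw [← Int.cast_abs, ← Int.le_floor] at hm
  exact abs_le.1 hm

theorem card_Icc_neg_floor_le (hH : 1 ≤ H) : (#(Icc (-⌊H⌋) ⌊H⌋) : ℝ) ≤ 3 * H := by
  have hfloor : 0 ≤ ⌊H⌋ := Int.floor_nonneg.2 (by linarith)
  have hcard : (#(Icc (-⌊H⌋) ⌊H⌋) : ℤ) = 2 * ⌊H⌋ + 1 := by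
    rw [Int.card_Icc, Int.toNat_of_nonneg (by linarith)]
    ring
  calc (#(Icc (-⌊H⌋) ⌊H⌋) : ℝ) = 2 * ⌊H⌋ + 1 := by exact_mod_cast hcard
    _ ≤ 3 * H := by linarith [Int.floor_le H]

theorem le_rpow_half_sub_of_pow_le_pow {a : ℝ} {n : ℕ} (ha : 0 ≤ a) (hH : 0 ≤ H) (hn : 2 ≤ n)
    (h : a ^ (2 * (n - 1)) ≤ H ^ (n * (n - 1) - 1)) :
    a ≤ H ^ ((n : ℝ) / 2 - 1 / (2 * n - 2)) := by
  have hn' : (2 : ℝ) ≤ n := by exact_mod_cast hn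
  have hcast : ((n - 1 : ℕ) : ℝ) = n - 1 := Nat.cast_pred (by omega)
  have hexp : (n : ℝ) / 2 - 1 / (2 * n - 2) =
      ((n * (n - 1) - 1 : ℕ) : ℝ) * ((2 * (n - 1) : ℕ) : ℝ)⁻¹ := by
    have : (n : ℝ) - 1 ≠ 0 := by linarith
    rw [Nat.cast_pred (Nat.mul_pos (by omega) (by omega))]
    push_cast
    rw [hcast, show (2 * n - 2 : ℝ) = 2 * (n - 1) by ring]
    field_simp
  rw [hexp, Real.rpow_mul hH, Real.rpow_natCast, Real.le_rpow_inv_iff_of_pos ha (by positivity)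
    (by rw [Nat.cast_pos]; omega), Real.rpow_natCast]
  exact h

theorem intCast_div_right_injective {q : ℤ} (hq : q ≠ 0) :
    Function.Injective fun a : ℤ ↦ (q : ℚ) / a := by
  simpa only [div_eq_mul_inv, Function.comp_def] using
    (mul_right_injective₀ (Int.cast_ne_zero.2 hq)).comp (inv_injective.comp Int.cast_injective)

variable {ι : Type*}

theorem exists_sum_div_mul_prod_eq_intCast {t : Finset ι} {x : ι → ℤ} (hx : ∀ j ∈ t, x j ≠ 0)
    (Q : ι → ℤ) : ∃ c : ℤ, (∑ j ∈ t, (Q j : ℚ) / x j) * ∏ j ∈ t, (x j : ℚ) = c := by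
  have hdvd : ∀ j ∈ t, ∃ c, ∏ k ∈ t, x k = x j * c := fun j hj ↦ dvd_prod_of_mem x hj
  choose! c hc using hdvd
  refine ⟨∑ j ∈ t, Q j * c j, ?_⟩
  rw [sum_mul, Int.cast_sum]
  refine sum_congr rfl fun j hj ↦ ?_
  have hxj : (x j : ℚ) ≠ 0 := Int.cast_ne_zero.2 (hx j hj)
  rw [← Int.cast_prod, hc j hj]
  push_cast
  field_simp

theorem sum_div_scaleOn [DecidableEq ι] (Q : ι → ℤ) (p : Finset ι) (g : ℤ) (z : ι → ℤ) :
    ∑ k ∈ p, (Q k : ℚ) / scaleOn p g z k = (∑ k ∈ p, (Q k : ℚ) / z k) / g := by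
  rw [sum_div]
  refine sum_congr rfl fun k hk ↦ ?_
  simp only [scaleOn, if_pos hk, Int.cast_mul]
  rw [div_div, mul_comm]

variable [Fintype ι]

/-- The integer tuples `x` of height at most `H` whose unit fractions solve the linear equation
`∑ Q i / x i = Q₀`. -/
def egyptianSolutions (H : ℝ) (Q₀ : ℤ) (Q : ι → ℤ) : Set (ι → ℤ) :=
  {x | (∀ i, x i ≠ 0 ∧ |(x i : ℝ)| ≤ H) ∧ ∑ i, (Q i : ℚ) / (x i : ℚ) = (Q₀ : ℚ)}

variable {Q₀ : ℤ} {Q : ι → ℤ}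

theorem finite_egyptianSolutions (H : ℝ) (Q₀ : ℤ) (Q : ι → ℤ) :
    (egyptianSolutions H Q₀ Q).Finite :=
  (Set.Finite.pi' fun _ ↦ Set.finite_Icc (-⌊H⌋) ⌊H⌋).subset
    fun _ hx i ↦ mem_Icc_floor_of_abs_le (hx.1 i).2

theorem egyptianSolutions_eq_empty [IsEmpty ι] (hQ₀ : Q₀ ≠ 0) :
    egyptianSolutions H Q₀ Q = ∅ := by
  refine Set.eq_empty_of_forall_notMem fun x hx ↦ hQ₀ ?_
  simpa using hx.2.symm

theorem ncard_egyptianSolutions_le_one [Subsingleton ι] (hQ : ∀ i, Q i ≠ 0) :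
    (egyptianSolutions H Q₀ Q).ncard ≤ 1 := by
  rw [Set.ncard_le_one (finite_egyptianSolutions H Q₀ Q)]
  intro x hx x' hx'
  funext i
  refine intCast_div_right_injective (hQ i) ?_
  beta_reduce
  rw [← Fintype.sum_subsingleton (fun i ↦ (Q i : ℚ) / x i) i,
    ← Fintype.sum_subsingleton (fun i ↦ (Q i : ℚ) / x' i) i, hx.2, hx'.2]

/-- The equations `∑ Q i / x i = Q₀` with `Q₀ ≠ 0` and nonzero coefficients of size at most `H ^ A`
have `O(H ^ α)` solutions of height at most `H`, uniformly in `H`, `Q₀` and `Q`. -/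
def EgyptianSolutionsBound (ι : Type*) [Fintype ι] (A α : ℝ) : Prop :=
  ∃ C > (0 : ℝ), ∀ H : ℝ, 1 ≤ H → ∀ (Q₀ : ℤ) (Q : ι → ℤ), Q₀ ≠ 0 → (∀ i, Q i ≠ 0) →
    (∀ i, |(Q i : ℝ)| ≤ H ^ A) → ((egyptianSolutions H Q₀ Q).ncard : ℝ) ≤ C * H ^ α

theorem egyptianSolutionsBound_of_card_le_one {A δ : ℝ} (hι : Fintype.card ι ≤ 1)
    (hδ : -(1 / 2) ≤ δ) : EgyptianSolutionsBound ι A ((Fintype.card ι : ℝ) / 2 + δ) := by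
  have := Fintype.card_le_one_iff_subsingleton.1 hι
  refine ⟨1, one_pos, fun H hH Q₀ Q hQ₀ hQ _ ↦ ?_⟩
  rcases isEmpty_or_nonempty ι with _ | _
  · rw [egyptianSolutions_eq_empty hQ₀, Set.ncard_empty, Nat.cast_zero]
    positivity
  · have hcard : Fintype.card ι = 1 := le_antisymm hι Fintype.card_pos
    calc ((egyptianSolutions H Q₀ Q).ncard : ℝ) ≤ 1 := by
          exact_mod_cast ncard_egyptianSolutions_le_one hQ
      _ ≤ 1 * H ^ ((Fintype.card ι : ℝ) / 2 + δ) := by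
          rw [one_mul, hcard, Nat.cast_one]
          exact Real.one_le_rpow hH (by linarith)

theorem natCast_prod_natAbs_le_rpow {A : ℝ} (hH : 0 ≤ H) (hQH : ∀ i, |(Q i : ℝ)| ≤ H ^ A) :
    ((∏ i, (Q i).natAbs : ℕ) : ℝ) ≤ H ^ (A * Fintype.card ι) := by
  calc ((∏ i, (Q i).natAbs : ℕ) : ℝ) = ∏ i, |(Q i : ℝ)| := by
        simp [Nat.cast_natAbs]
    _ ≤ ∏ _i : ι, H ^ A := prod_le_prod (fun _ _ ↦ abs_nonneg _) fun i _ ↦ hQH i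
    _ = H ^ (A * Fintype.card ι) := by simp [Real.rpow_mul_natCast hH]

/-- The solutions in which the fractions `Q k / x k` with `k ∈ p` cancel. -/
def vanishingSolutions (H : ℝ) (Q₀ : ℤ) (Q : ι → ℤ) (p : Finset ι) : Set (ι → ℤ) :=
  {x ∈ egyptianSolutions H Q₀ Q | ∑ k ∈ p, (Q k : ℚ) / x k = 0}

/-- The solutions in which no two of the fractions `Q k / x k` cancel. -/
def nonvanishingSolutions (H : ℝ) (Q₀ : ℤ) (Q : ι → ℤ) : Set (ι → ℤ) :=
  {x ∈ egyptianSolutions H Q₀ Q | ∀ p : Finset ι, #p = 2 → ∑ k ∈ p, (Q k : ℚ) / x k ≠ 0}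

theorem ncard_egyptianSolutions_le_add_sum (H : ℝ) (Q₀ : ℤ) (Q : ι → ℤ) :
    (egyptianSolutions H Q₀ Q).ncard ≤ (nonvanishingSolutions H Q₀ Q).ncard +
      ∑ p ∈ powersetCard 2 univ, (vanishingSolutions H Q₀ Q p).ncard := by
  have hcover : egyptianSolutions H Q₀ Q ⊆ nonvanishingSolutions H Q₀ Q ∪
      ⋃ p ∈ powersetCard 2 univ, vanishingSolutions H Q₀ Q p := by
    intro x hx
    by_cases h : ∀ p : Finset ι, #p = 2 → ∑ k ∈ p, (Q k : ℚ) / x k ≠ 0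
    · exact Or.inl ⟨hx, h⟩
    · push Not at h
      obtain ⟨p, hp, hsum⟩ := h
      exact Or.inr (Set.mem_biUnion (mem_powersetCard_univ.2 hp) ⟨hx, hsum⟩)
  have hfinite : (nonvanishingSolutions H Q₀ Q ∪
      ⋃ p ∈ powersetCard 2 univ, vanishingSolutions H Q₀ Q p).Finite :=
    (finite_egyptianSolutions H Q₀ Q).subset
      (Set.union_subset (fun _ hx ↦ hx.1) (Set.iUnion₂_subset fun _ _ _ hx ↦ hx.1))
  calc (egyptianSolutions H Q₀ Q).ncard ≤ (nonvanishingSolutions H Q₀ Q).ncard +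
        (⋃ p ∈ powersetCard 2 univ, vanishingSolutions H Q₀ Q p).ncard :=
        (Set.ncard_le_ncard hcover hfinite).trans (Set.ncard_union_le _ _)
    _ ≤ _ := by
        gcongr
        exact set_ncard_biUnion_le _ _

variable [DecidableEq ι]

theorem dvd_mul_prod_erase {x : ι → ℤ} (hx : x ∈ egyptianSolutions H Q₀ Q) (i : ι) :
    x i ∣ Q i * ∏ j ∈ univ.erase i, x j := by
  obtain ⟨c, hc⟩ :=
    exists_sum_div_mul_prod_eq_intCast (t := univ.erase i) (fun j _ ↦ (hx.1 j).1) Q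
  have hxi : (x i : ℚ) ≠ 0 := Int.cast_ne_zero.2 (hx.1 i).1
  have hQi : (Q i : ℚ) = x i * (Q₀ - ∑ j ∈ univ.erase i, (Q j : ℚ) / x j) := by
    rw [← hx.2, ← add_sum_erase univ _ (mem_univ i), add_sub_cancel_right, mul_div_cancel₀ _ hxi]
  refine ⟨Q₀ * ∏ j ∈ univ.erase i, x j - c, Int.cast_injective (α := ℚ) ?_⟩
  push_cast
  rw [hQi, ← hc]
  ring

theorem dvd_prod_erase_of_coprime {x : ι → ℤ} (hx : x ∈ egyptianSolutions H Q₀ Q) {W : ℕ}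
    (hQW : ∀ i, (Q i).natAbs ∣ W) {s y : ι → ℕ} (hsy : ∀ k, (x k).natAbs = s k * y k)
    (hs : ∀ k, (s k).primeFactors ⊆ W.primeFactors) (hy : ∀ k, (y k).Coprime W) (i : ι) :
    y i ∣ ∏ j ∈ univ.erase i, y j := by
  have hsy₀ (k : ι) : s k * y k ≠ 0 := hsy k ▸ Int.natAbs_ne_zero.2 (hx.1 k).1
  have hcop (k : ι) : (y i).Coprime (s k) := by
    rw [← Nat.disjoint_primeFactors (right_ne_zero_of_mul (hsy₀ i)) (left_ne_zero_of_mul (hsy₀ k))]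
    exact (hy i).disjoint_primeFactors.mono_right (hs k)
  have hdvd : y i ∣ (Q i).natAbs * ((∏ j ∈ univ.erase i, s j) * ∏ j ∈ univ.erase i, y j) := by
    have h := (Dvd.intro_left _ (hsy i).symm).trans
      (Int.natAbs_dvd_natAbs.2 (dvd_mul_prod_erase hx i))
    have hprod : (∏ j ∈ univ.erase i, x j).natAbs = ∏ j ∈ univ.erase i, (x j).natAbs :=
      map_prod Int.natAbsHom _ _
    rwa [Int.natAbs_mul, hprod, prod_congr rfl fun j _ ↦ hsy j, prod_mul_distrib] at h
  exact (Nat.Coprime.prod_right fun j _ ↦ hcop j).dvd_of_dvd_mul_left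
    (((hy i).coprime_dvd_right (hQW i)).dvd_of_dvd_mul_left hdvd)

/-- The values that an entry of a solution can take once the number `a` is known and the large gcd
has been divided out: up to sign, a factor supported on the primes of `W = ∏ |Q i|` times a divisor
of `a ^ 3`. -/
noncomputable def reducedEntries (H : ℝ) (W a : ℕ) : Finset ℤ :=
  (({1, -1} : Finset ℤ) ×ˢ factoredNumbersUpTo H W ×ˢ (a ^ 3).divisors).image
    fun q ↦ q.1 * q.2.1 * q.2.2

theorem card_reducedEntries_le (H : ℝ) (W a : ℕ) :
    #(reducedEntries H W a) ≤ 2 * (#(factoredNumbersUpTo H W) * #(a ^ 3).divisors) := by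
  refine card_image_le.trans ?_
  rw [card_product, card_product]
  gcongr
  exact card_le_two

theorem sign_mul_mul_mem_reducedEntries {m : ℤ} {W a s w : ℕ} (hm : m ≠ 0) (ha : a ≠ 0)
    (hs : s ∈ factoredNumbersUpTo H W) (hw : w ∣ a ^ 3) :
    m.sign * s * w ∈ reducedEntries H W a := by
  have hsign : m.sign ∈ ({1, -1} : Finset ℤ) := by
    rcases hm.lt_or_gt with h | h
    · simp [Int.sign_eq_neg_one_of_neg h]
    · simp [Int.sign_eq_one_of_pos h]
  refine mem_image.2 ⟨(m.sign, s, w), ?_, rfl⟩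
  simp only [mem_product, Nat.mem_divisors]
  exact ⟨hsign, hs, hw, pow_ne_zero 3 ha⟩

theorem exists_card_reducedEntries_le {A B η : ℝ} (hA : 0 < A) (hB : 0 < B) (hη : 0 < η) :
    ∃ C > (0 : ℝ), ∀ H : ℝ, 1 ≤ H → ∀ W a : ℕ, W ≠ 0 → a ≠ 0 → (W : ℝ) ≤ H ^ A →
      (a : ℝ) ≤ H ^ B → (#(reducedEntries H W a) : ℝ) ≤ C * H ^ η := by
  obtain ⟨C₁, hC₁, hW_le⟩ := exists_card_factoredNumbersUpTo_le hA (half_pos hη)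
  obtain ⟨C₂, hC₂, hdiv⟩ :=
    exists_card_divisors_le_rpow_of_le_rpow (E := B * 3) (by positivity) (half_pos hη)
  refine ⟨2 * (C₁ * C₂), by positivity, fun H hH W a hW ha hWH haH ↦ ?_⟩
  have hH₀ : 0 < H := by linarith
  have ha_cube : ((a ^ 3 : ℕ) : ℝ) ≤ H ^ (B * 3) := by
    rw [Nat.cast_pow, Real.rpow_mul hH₀.le, Real.rpow_ofNat]
    gcongr
  calc (#(reducedEntries H W a) : ℝ)
      ≤ 2 * (#(factoredNumbersUpTo H W) * #(a ^ 3).divisors) := by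
        exact_mod_cast card_reducedEntries_le H W a
    _ ≤ 2 * ((C₁ * H ^ (η / 2)) * (C₂ * H ^ (η / 2))) := by
        gcongr
        exacts [hW_le H hH W hW hWH, hdiv H hH₀.le _ (pow_ne_zero 3 ha) ha_cube]
    _ = 2 * (C₁ * C₂) * H ^ η := by
        rw [mul_mul_mul_comm, ← Real.rpow_add hH₀, add_halves]
        ring

theorem exists_eq_scaleOn_mem_reducedEntries (hι : 2 ≤ Fintype.card ι) {x : ι → ℤ}
    (hx : x ∈ egyptianSolutions H Q₀ Q) {W : ℕ} (hW : W ≠ 0) (hQW : ∀ i, (Q i).natAbs ∣ W) :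
    ∃ p : Finset ι, #p = 2 ∧ ∃ (g : ℤ) (z : ι → ℤ), x = scaleOn p g z ∧ ∃ a : ℕ, a ≠ 0 ∧
      (a : ℝ) ≤ H ^ ((Fintype.card ι : ℝ) / 2 - 1 / (2 * Fintype.card ι - 2)) ∧
      ∀ k, z k ∈ reducedEntries H W a := by
  have hx₀ (k : ι) : (x k).natAbs ≠ 0 := Int.natAbs_ne_zero.2 (hx.1 k).1
  have hxH (k : ι) : ((x k).natAbs : ℝ) ≤ H := by
    rw [Nat.cast_natAbs, Int.cast_abs]
    exact (hx.1 k).2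
  choose s y hsy hs hy using fun k ↦ exists_eq_mul_coprime hW (hx₀ k)
  have hs₀ (k : ι) : s k ≠ 0 := left_ne_zero_of_mul (hsy k ▸ hx₀ k)
  have hy₀ (k : ι) : y k ≠ 0 := right_ne_zero_of_mul (hsy k ▸ hx₀ k)
  have hle_H {m : ℕ} {k : ι} (hm : m ∣ (x k).natAbs) : (m : ℝ) ≤ H :=
    le_trans (by exact_mod_cast Nat.le_of_dvd (Nat.pos_of_ne_zero (hx₀ k)) hm) (hxH k)
  obtain ⟨p, hp, g, w, hw, a, ha, ha_cube, i, ha_pow⟩ :=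
    exists_eq_scaleOn_dvd_cube hι hy₀ (dvd_prod_erase_of_coprime hx hQW hsy hs hy)
  refine ⟨p, hp, g, fun k ↦ (x k).sign * s k * w k, ?_, a, ha, ?_, fun k ↦ ?_⟩
  · funext k
    conv_lhs => rw [← Int.sign_mul_natAbs (x k), hsy k, hw]
    simp only [scaleOn]
    split_ifs <;> push_cast <;> ring
  · have hyH : (y i : ℝ) ≤ H := hle_H (Dvd.intro_left _ (hsy i).symm)
    refine le_rpow_half_sub_of_pow_le_pow a.cast_nonneg ((y i).cast_nonneg.trans hyH) hι ?_
    calc (a : ℝ) ^ (2 * (Fintype.card ι - 1))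
        ≤ (y i : ℝ) ^ (Fintype.card ι * (Fintype.card ι - 1) - 1) := by exact_mod_cast ha_pow
      _ ≤ H ^ (Fintype.card ι * (Fintype.card ι - 1) - 1) := by gcongr
  · exact sign_mul_mul_mem_reducedEntries (hx.1 k).1 ha
      (mem_factoredNumbersUpTo.2 ⟨hs₀ k, hle_H (Dvd.intro _ (hsy k).symm), hs k⟩) (ha_cube k)

theorem eq_of_scaleOn_mem {p : Finset ι} {g g' : ℤ} {z : ι → ℤ}
    (hg : scaleOn p g z ∈ egyptianSolutions H Q₀ Q)
    (hg' : scaleOn p g' z ∈ egyptianSolutions H Q₀ Q)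
    (hne : ∑ k ∈ p, (Q k : ℚ) / scaleOn p g z k ≠ 0) : g = g' := by
  have hcompl : ∑ k ∈ pᶜ, (Q k : ℚ) / scaleOn p g z k = ∑ k ∈ pᶜ, (Q k : ℚ) / scaleOn p g' z k :=
    sum_congr rfl fun k hk ↦ by simp only [scaleOn, if_neg (mem_compl.1 hk)]
  have heq : ∑ k ∈ p, (Q k : ℚ) / scaleOn p g z k = ∑ k ∈ p, (Q k : ℚ) / scaleOn p g' z k := by
    have h := hg.2.trans hg'.2.symm
    rwa [← sum_add_sum_compl p, ← sum_add_sum_compl p, hcompl, add_left_inj] at h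
  rw [sum_div_scaleOn, div_eq_mul_inv] at hne
  rw [sum_div_scaleOn, sum_div_scaleOn, div_eq_mul_inv, div_eq_mul_inv,
    mul_right_inj' (left_ne_zero_of_mul hne), inv_inj] at heq
  exact Int.cast_injective heq

theorem ncard_nonvanishingSolutions_le {Z : Finset (ι → ℤ)}
    (hZ : ∀ x ∈ nonvanishingSolutions H Q₀ Q,
      ∃ p : Finset ι, #p = 2 ∧ ∃ g, ∃ z ∈ Z, x = scaleOn p g z) :
    (nonvanishingSolutions H Q₀ Q).ncard ≤ (Fintype.card ι).choose 2 * #Z := by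
  -- For fixed `p` and `z`, the equation determines the scaling factor `g`.
  have hfiber (q : Finset ι × (ι → ℤ)) (hq : #q.1 = 2) :
      {x ∈ nonvanishingSolutions H Q₀ Q | ∃ g, x = scaleOn q.1 g q.2}.ncard ≤ 1 := by
    rw [Set.ncard_le_one ((finite_egyptianSolutions H Q₀ Q).subset fun _ hx ↦ hx.1.1)]
    rintro _ ⟨hx, g, rfl⟩ _ ⟨hx', g', rfl⟩
    rw [eq_of_scaleOn_mem hx.1 hx'.1 (hx.2 q.1 hq)]
  have hcover : nonvanishingSolutions H Q₀ Q ⊆ ⋃ q ∈ powersetCard 2 univ ×ˢ Z,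
      {x ∈ nonvanishingSolutions H Q₀ Q | ∃ g, x = scaleOn q.1 g q.2} := by
    intro x hx
    obtain ⟨p, hp, g, z, hz, hxz⟩ := hZ x hx
    exact Set.mem_biUnion (x := (p, z)) (by simp [hp, hz]) ⟨hx, g, hxz⟩
  have hfinite : (⋃ q ∈ powersetCard 2 univ ×ˢ Z,
      {x ∈ nonvanishingSolutions H Q₀ Q | ∃ g, x = scaleOn q.1 g q.2}).Finite :=
    (finite_egyptianSolutions H Q₀ Q).subset (Set.iUnion₂_subset fun _ _ _ hx ↦ hx.1.1)
  calc (nonvanishingSolutions H Q₀ Q).ncard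
      ≤ ∑ q ∈ powersetCard 2 univ ×ˢ Z,
          {x ∈ nonvanishingSolutions H Q₀ Q | ∃ g, x = scaleOn q.1 g q.2}.ncard :=
        (Set.ncard_le_ncard hcover hfinite).trans (set_ncard_biUnion_le _ _)
    _ ≤ #(powersetCard 2 (univ : Finset ι) ×ˢ Z) • 1 := sum_le_card_nsmul _ _ _ fun q hq ↦
        hfiber q (mem_powersetCard.1 (mem_product.1 hq).1).2
    _ = (Fintype.card ι).choose 2 * #Z := by
        rw [smul_eq_mul, mul_one, card_product, card_powersetCard, card_univ]

/-- The tuples with all entries in `reducedEntries H W a`, for some positive `a ≤ B`. -/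
noncomputable def reducedTuples (ι : Type*) [Fintype ι] [DecidableEq ι] (H : ℝ) (W : ℕ) (B : ℝ) :
    Finset (ι → ℤ) :=
  (Icc 1 ⌊B⌋₊).biUnion fun a ↦ Fintype.piFinset fun _ ↦ reducedEntries H W a

theorem mem_reducedTuples {W a : ℕ} {B : ℝ} {z : ι → ℤ} (ha : a ≠ 0) (haB : (a : ℝ) ≤ B)
    (hz : ∀ k, z k ∈ reducedEntries H W a) : z ∈ reducedTuples ι H W B :=
  mem_biUnion.2 ⟨a, mem_Icc.2 ⟨Nat.one_le_iff_ne_zero.2 ha, Nat.le_floor haB⟩,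
    Fintype.mem_piFinset.2 hz⟩

theorem card_reducedTuples_le {W : ℕ} {B L : ℝ} (hB : 0 ≤ B) (hL₀ : 0 ≤ L)
    (hL : ∀ a : ℕ, a ≠ 0 → (a : ℝ) ≤ B → (#(reducedEntries H W a) : ℝ) ≤ L) :
    (#(reducedTuples ι H W B) : ℝ) ≤ B * L ^ Fintype.card ι := by
  have hcard : #(reducedTuples ι H W B) ≤
      ∑ a ∈ Icc 1 ⌊B⌋₊, #(reducedEntries H W a) ^ Fintype.card ι :=
    card_biUnion_le.trans_eq (sum_congr rfl fun a _ ↦ by simp)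
  calc (#(reducedTuples ι H W B) : ℝ)
      ≤ ∑ a ∈ Icc 1 ⌊B⌋₊, (#(reducedEntries H W a) : ℝ) ^ Fintype.card ι := by exact_mod_cast hcard
    _ ≤ ∑ _a ∈ Icc 1 ⌊B⌋₊, L ^ Fintype.card ι := by
        refine sum_le_sum fun a ha ↦ ?_
        obtain ⟨ha₁, haB⟩ := mem_Icc.1 ha
        gcongr
        exact hL a (by omega) ((Nat.le_floor_iff hB).1 haB)
    _ = ⌊B⌋₊ * L ^ Fintype.card ι := by simp
    _ ≤ B * L ^ Fintype.card ι := by gcongr; exact Nat.floor_le hB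

omit [DecidableEq ι] in
theorem exists_ncard_nonvanishingSolutions_le (hι : 2 ≤ Fintype.card ι) {A ε : ℝ} (hA : 0 < A)
    (hε : 0 < ε) :
    ∃ C > (0 : ℝ), ∀ H : ℝ, 1 ≤ H → ∀ (Q₀ : ℤ) (Q : ι → ℤ), (∀ i, Q i ≠ 0) →
      (∀ i, |(Q i : ℝ)| ≤ H ^ A) → ((nonvanishingSolutions H Q₀ Q).ncard : ℝ) ≤
        C * H ^ ((Fintype.card ι : ℝ) / 2 - 1 / (2 * Fintype.card ι - 2) + ε) := by
  classical
  set n := Fintype.card ι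
  have hn : (2 : ℝ) ≤ n := by exact_mod_cast hι
  set θ : ℝ := (n : ℝ) / 2 - 1 / (2 * n - 2)
  have hθ : θ ≤ n := by
    have : 0 ≤ 1 / (2 * (n : ℝ) - 2) := one_div_nonneg.2 (by linarith)
    exact (sub_le_self _ this).trans (half_le_self n.cast_nonneg)
  obtain ⟨C, hC, hentries⟩ := exists_card_reducedEntries_le (A := A * n) (B := n) (η := ε / n)
    (by positivity) (by positivity) (by positivity)
  have hchoose : 0 < n.choose 2 := Nat.choose_pos hι
  refine ⟨n.choose 2 * C ^ n, by positivity, fun H hH Q₀ Q hQ hQH ↦ ?_⟩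
  have hH₀ : 0 < H := by linarith
  set W := ∏ i, (Q i).natAbs
  have hW : W ≠ 0 := prod_ne_zero_iff.2 fun i _ ↦ Int.natAbs_ne_zero.2 (hQ i)
  have hWH : (W : ℝ) ≤ H ^ (A * n) := natCast_prod_natAbs_le_rpow hH₀.le hQH
  have hnonvanishing := ncard_nonvanishingSolutions_le (Z := reducedTuples ι H W (H ^ θ))
    fun x (hx : x ∈ nonvanishingSolutions H Q₀ Q) ↦ by
      obtain ⟨p, hp, g, z, hxz, a, ha, haH, hz⟩ := exists_eq_scaleOn_mem_reducedEntries hι hx.1 hW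
        fun i ↦ dvd_prod_of_mem (fun i ↦ (Q i).natAbs) (mem_univ i)
      exact ⟨p, hp, g, z, mem_reducedTuples ha haH hz, hxz⟩
  have htuples := card_reducedTuples_le (ι := ι) (H := H) (W := W) (B := H ^ θ)
    (L := C * H ^ (ε / n)) (by positivity) (by positivity) fun a ha haH ↦
      hentries H hH W a hW ha hWH (haH.trans (Real.rpow_le_rpow_of_exponent_le hH hθ))
  calc ((nonvanishingSolutions H Q₀ Q).ncard : ℝ)
      ≤ n.choose 2 * #(reducedTuples ι H W (H ^ θ)) := by exact_mod_cast hnonvanishing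
    _ ≤ n.choose 2 * (H ^ θ * (C * H ^ (ε / n)) ^ n) := by gcongr
    _ = n.choose 2 * C ^ n * H ^ (θ + ε) := by
        rw [mul_pow, ← Real.rpow_mul_natCast hH₀.le, div_mul_cancel₀ ε (by positivity),
          Real.rpow_add hH₀]
        ring

theorem restrict_mem_egyptianSolutions {p : Finset ι} {x : ι → ℤ}
    (hx : x ∈ vanishingSolutions H Q₀ Q p) :
    (fun k : {k // k ∉ p} ↦ x k) ∈ egyptianSolutions H Q₀ fun k : {k // k ∉ p} ↦ Q k := by
  refine ⟨fun k ↦ hx.1.1 k, ?_⟩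
  rw [← hx.1.2, ← sum_add_sum_compl p, hx.2, zero_add]
  exact (sum_subtype pᶜ (fun _ ↦ mem_compl) fun k ↦ (Q k : ℚ) / x k).symm

theorem eq_of_mem_vanishingSolutions_pair {i j : ι} (hij : i ≠ j) (hQj : Q j ≠ 0) {x x' : ι → ℤ}
    (hx : x ∈ vanishingSolutions H Q₀ Q {i, j}) (hx' : x' ∈ vanishingSolutions H Q₀ Q {i, j})
    (hi : x i = x' i) (hcompl : ∀ k ∉ ({i, j} : Finset ι), x k = x' k) : x = x' := by
  have hj : x j = x' j := by
    have h := hx.2.trans hx'.2.symm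
    rw [sum_pair hij, sum_pair hij, hi, add_right_inj] at h
    exact intCast_div_right_injective hQj h
  funext k
  by_cases hk : k ∈ ({i, j} : Finset ι)
  · rcases mem_insert.1 hk with rfl | hk
    · exact hi
    · rwa [mem_singleton.1 hk]
  · exact hcompl k hk

theorem ncard_vanishingSolutions_le {p : Finset ι} (hp : #p = 2) (hH : 1 ≤ H)
    (hQ : ∀ i, Q i ≠ 0) :
    ((vanishingSolutions H Q₀ Q p).ncard : ℝ) ≤
      3 * H * (egyptianSolutions H Q₀ fun k : {k // k ∉ p} ↦ Q k).ncard := by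
  obtain ⟨i, j, hij, rfl⟩ := card_eq_two.1 hp
  have hncard : (vanishingSolutions H Q₀ Q {i, j}).ncard ≤
      ((Icc (-⌊H⌋) ⌊H⌋ : Set ℤ) ×ˢ
        egyptianSolutions H Q₀ fun k : {k // k ∉ ({i, j} : Finset ι)} ↦ Q k).ncard := by
    refine Set.ncard_le_ncard_of_injOn (fun x ↦ (x i, fun k ↦ x k)) (fun x hx ↦ ?_)
      (fun x hx x' hx' h ↦ ?_) ((finite_toSet _).prod (finite_egyptianSolutions _ _ _))
    · exact ⟨by simpa using mem_Icc_floor_of_abs_le (hx.1.1 i).2, restrict_mem_egyptianSolutions hx⟩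
    · obtain ⟨hi, hcompl⟩ := Prod.mk.inj h
      exact eq_of_mem_vanishingSolutions_pair hij (hQ j) hx hx' hi
        fun k hk ↦ congrFun hcompl ⟨k, hk⟩
  rw [Set.ncard_prod, Set.ncard_coe_finset] at hncard
  calc ((vanishingSolutions H Q₀ Q {i, j}).ncard : ℝ)
      ≤ #(Icc (-⌊H⌋) ⌊H⌋) *
          (egyptianSolutions H Q₀ fun k : {k // k ∉ ({i, j} : Finset ι)} ↦ Q k).ncard := by
        exact_mod_cast hncard
    _ ≤ 3 * H * (egyptianSolutions H Q₀ fun k : {k // k ∉ ({i, j} : Finset ι)} ↦ Q k).ncard := by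
        gcongr
        exact card_Icc_neg_floor_le hH

theorem ncard_vanishingSolutions_le_rpow {p : Finset ι} (hp : #p = 2) {C A α : ℝ}
    (hC : ∀ H : ℝ, 1 ≤ H → ∀ (Q₀ : ℤ) (Q : {k // k ∉ p} → ℤ), Q₀ ≠ 0 → (∀ i, Q i ≠ 0) →
      (∀ i, |(Q i : ℝ)| ≤ H ^ A) → ((egyptianSolutions H Q₀ Q).ncard : ℝ) ≤ C * H ^ α)
    (hH : 1 ≤ H) (hQ₀ : Q₀ ≠ 0) (hQ : ∀ i, Q i ≠ 0) (hQH : ∀ i, |(Q i : ℝ)| ≤ H ^ A) :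
    ((vanishingSolutions H Q₀ Q p).ncard : ℝ) ≤ 3 * C * H ^ (α + 1) := by
  calc ((vanishingSolutions H Q₀ Q p).ncard : ℝ) ≤ 3 * H * (C * H ^ α) := by
        refine (ncard_vanishingSolutions_le hp hH hQ).trans ?_
        gcongr
        exact hC H hH Q₀ _ hQ₀ (fun k ↦ hQ k) fun k ↦ hQH k
    _ = 3 * C * H ^ (α + 1) := by
        rw [Real.rpow_add (by linarith), Real.rpow_one]
        ring

theorem egyptianSolutionsBound_of_forall_card_eq_two (hι : 2 ≤ Fintype.card ι) {A δ : ℝ}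
    (hA : 0 < A) (hδ : -(1 / (2 * Fintype.card ι - 2)) < δ)
    (hcompl : ∀ p : Finset ι, #p = 2 →
      EgyptianSolutionsBound {k // k ∉ p} A ((Fintype.card {k // k ∉ p} : ℝ) / 2 + δ)) :
    EgyptianSolutionsBound ι A ((Fintype.card ι : ℝ) / 2 + δ) := by
  set n := Fintype.card ι with hn
  obtain ⟨C₁, hC₁, hnonvanishing⟩ :=
    exists_ncard_nonvanishingSolutions_le hι hA (neg_lt_iff_pos_add.1 hδ)
  rw [← hn, sub_add_add_cancel] at hnonvanishing
  choose! C hC hvanishing using hcompl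
  refine ⟨C₁ + ∑ p ∈ powersetCard 2 univ, 3 * C p, ?_, fun H hH Q₀ Q hQ₀ hQ hQH ↦ ?_⟩
  · exact add_pos_of_pos_of_nonneg hC₁ (sum_nonneg fun p hp ↦
      mul_nonneg zero_le_three (hC p (mem_powersetCard_univ.1 hp)).le)
  have hexp {p : Finset ι} (hp : #p = 2) :
      (Fintype.card {k // k ∉ p} : ℝ) / 2 + δ + 1 = n / 2 + δ := by
    rw [Fintype.card_subtype_compl, Fintype.card_coe, hp, Nat.cast_sub hι, Nat.cast_ofNat]
    ring
  calc ((egyptianSolutions H Q₀ Q).ncard : ℝ)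
      ≤ (nonvanishingSolutions H Q₀ Q).ncard +
          ∑ p ∈ powersetCard 2 univ, ((vanishingSolutions H Q₀ Q p).ncard : ℝ) := by
        exact_mod_cast ncard_egyptianSolutions_le_add_sum H Q₀ Q
    _ ≤ C₁ * H ^ ((n : ℝ) / 2 + δ) +
          ∑ p ∈ powersetCard 2 univ, 3 * C p * H ^ ((n : ℝ) / 2 + δ) := by
        refine add_le_add (hnonvanishing H hH Q₀ Q hQ hQH) (sum_le_sum fun p hp ↦ ?_)
        have hp₂ := mem_powersetCard_univ.1 hp
        exact hexp hp₂ ▸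
          ncard_vanishingSolutions_le_rpow hp₂ (hvanishing p hp₂) hH hQ₀ hQ hQH
    _ = (C₁ + ∑ p ∈ powersetCard 2 univ, 3 * C p) * H ^ ((n : ℝ) / 2 + δ) := by
        rw [add_mul, sum_mul]

omit [DecidableEq ι] in
theorem egyptianSolutionsBound_of_card_le {N : ℕ} (hN : 2 ≤ N) (hι : Fintype.card ι ≤ N)
    {A δ : ℝ} (hA : 0 < A) (hδ : -(1 / (2 * N - 2)) < δ) :
    EgyptianSolutionsBound ι A ((Fintype.card ι : ℝ) / 2 + δ) := by
  classical
  have hN' : (2 : ℝ) ≤ N := by exact_mod_cast hN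
  induction hm : Fintype.card ι using Nat.strong_induction_on generalizing ι with | _ m ih
  rw [← hm]
  rcases Nat.lt_or_ge m 2 with hm₂ | hm₂
  · have : 1 / (2 * (N : ℝ) - 2) ≤ 1 / 2 := one_div_le_one_div_of_le two_pos (by linarith)
    exact egyptianSolutionsBound_of_card_le_one (by omega) (by linarith)
  refine egyptianSolutionsBound_of_forall_card_eq_two (hm ▸ hm₂) hA ?_ fun p hp ↦ ?_
  · have hm' : (2 : ℝ) ≤ Fintype.card ι := by exact_mod_cast hm ▸ hm₂
    have : 1 / (2 * (N : ℝ) - 2) ≤ 1 / (2 * Fintype.card ι - 2) :=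
      one_div_le_one_div_of_le (by linarith) (by gcongr)
    linarith
  · have hcard : Fintype.card {k // k ∉ p} = m - 2 := by
      rw [Fintype.card_subtype_compl, hm, Fintype.card_coe, hp]
    exact ih _ (by omega) (by omega) rfl

end EgyptianSolutions

theorem stmt19_general {ι : Type*} [Fintype ι] (hι : 2 ≤ Fintype.card ι) {A ε : ℝ} (hA : 0 < A)
    (hε : 0 < ε) :
    ∃ C > (0 : ℝ), ∀ H : ℝ, 1 ≤ H → ∀ (Q₀ : ℤ) (Q : ι → ℤ), Q₀ ≠ 0 → (∀ i, Q i ≠ 0) →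
      (∀ i, |(Q i : ℝ)| ≤ H ^ A) → ((egyptianSolutions H Q₀ Q).ncard : ℝ) ≤
        C * H ^ ((Fintype.card ι : ℝ) / 2 - 1 / (2 * Fintype.card ι - 2) + ε) := by
  rw [sub_add_eq_add_sub, add_sub_assoc]
  exact egyptianSolutionsBound_of_card_le hι le_rfl hA (by linarith)

theorem stmt19 (n : ℕ) (hn : n ≥ 4) (A : ℝ) (hA : A > 0) :
    ∀ ε > (0 : ℝ), ∃ C : ℝ, ∀ H : ℝ, H ≥ 2 →
      ∀ Q₀ : ℤ, ∀ Q : Fin n → ℤ,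
      Q₀ ≠ 0 → (∀ i, Q i ≠ 0) →
      (|Q₀| : ℝ) ≤ H ^ A → (∀ i, (|Q i| : ℝ) ≤ H ^ A) →
      (Set.ncard {x : Fin n → ℤ |
          (∀ i, x i ≠ 0 ∧ (|x i| : ℝ) ≤ H) ∧
          ∑ i, (Q i : ℚ) / (x i : ℚ) = (Q₀ : ℚ)} : ℝ) ≤
        C * H ^ ((n : ℝ) / 2 - 1 / (2 * n - 2) + ε) := by
  intro ε hε
  obtain ⟨C, -, hC⟩ := stmt19_general (ι := Fin n) (by rw [Fintype.card_fin]; omega) hA hε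
  rw [Fintype.card_fin] at hC
  exact ⟨C, fun H hH Q₀ Q hQ₀ hQ _ hQH ↦ hC H (one_le_two.trans hH) Q₀ Q hQ₀ hQ hQH⟩
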